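/- Let (Q,I) be a gentle bound quiver and let p denote the number of permitted threads of (Q,I). Then 2|Q0| = |Q1| + p. In particular p = 2|Q0| − |Q1| ≥ 1, and |Q0| − 1 ≤ |Q1| ≤ 2|Q0| − 1. -/

import Mathlib

set_option autoImplicit false

attribute [local instance] Classical.propDecidable

/-- A bound-quiver datum: a quiver (source and target maps on a set of arrows) together
with a set of length-two relations; `rel a b` means that the length-two path `ab`
(composable, i.e. `src a = tgt b`; paths are written from right to left) lies in the
generating set of relations of the ideal `I`. -/
structure BQuiv (V A : Type) where
  src : A → V
  tgt : A → V
  rel : A → A → Prop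

namespace BQuiv

variable {V A : Type}

/-- `l` is (the list of arrows of) a path of the quiver, written from right to left:
`l = [a₁, a₂, …, a_ℓ]` represents `a₁a₂⋯a_ℓ` and we ask `src aₜ = tgt aₜ₊₁`. -/
def PathChain (Q : BQuiv V A) (l : List A) : Prop :=
  l.Chain' (fun a b => Q.src a = Q.tgt b)

/-- The degree of a vertex: the number of outgoing plus the number of incoming arrows. -/
noncomputable def deg (Q : BQuiv V A) (v : V) : ℕ :=
  Nat.card {a : A // Q.src a = v} + Nat.card {a : A // Q.tgt a = v}

/-- `(Q, I)` is a gentle bound quiver. -/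
structure IsGentle (Q : BQuiv V A) : Prop where
  /-- relations are composable length-two paths -/
  rel_comp : ∀ a b, Q.rel a b → Q.src a = Q.tgt b
  /-- at most two outgoing arrows at every vertex -/
  out_le : ∀ v, Nat.card {a : A // Q.src a = v} ≤ 2
  /-- at most two incoming arrows at every vertex -/
  in_le : ∀ v, Nat.card {a : A // Q.tgt a = v} ≤ 2
  /-- for every arrow `b` there is at most one arrow `a` with `ab ∉ I` -/
  unique_nonrel_post : ∀ b a a', Q.src a = Q.tgt b → Q.src a' = Q.tgt b →
    ¬ Q.rel a b → ¬ Q.rel a' b → a = a'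
  /-- for every arrow `b` there is at most one arrow `c` with `bc ∉ I` -/
  unique_nonrel_pre : ∀ b c c', Q.src b = Q.tgt c → Q.src b = Q.tgt c' →
    ¬ Q.rel b c → ¬ Q.rel b c' → c = c'
  /-- for every arrow `b` there is at most one arrow `a` with `ab ∈ I` -/
  unique_rel_post : ∀ b a a', Q.rel a b → Q.rel a' b → a = a'
  /-- for every arrow `b` there is at most one arrow `c` with `bc ∈ I` -/
  unique_rel_pre : ∀ b c c', Q.rel b c → Q.rel b c' → c = c'
  /-- admissibility: there is `m ≥ 2` such that every path of length `m` contains a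
  length-two subpath lying in the relation set -/
  admissible : ∃ m, 2 ≤ m ∧ ∀ l : List A, l.length = m → Q.PathChain l →
    ¬ l.Chain' (fun a b => ¬ Q.rel a b)
  /-- the quiver is connected -/
  connected : ∀ u v : V, Relation.ReflTransGen
    (fun x y => ∃ a, (Q.src a = x ∧ Q.tgt a = y) ∨ (Q.src a = y ∧ Q.tgt a = x)) u v
  /-- the quiver has at least one arrow -/
  has_arrow : Nonempty A

/-- A path of the quiver `Q`, with a base (source) vertex so that trivial paths make
sense.  The arrows are written from right to left. -/
structure Path (Q : BQuiv V A) where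
  base : V
  arrows : List A
  chain : arrows.Chain' (fun a b => Q.src a = Q.tgt b)
  base_eq : ∀ a, arrows.getLast? = some a → Q.src a = base

variable {Q : BQuiv V A}

/-- The source vertex of a path. -/
def Path.srcV (p : Path Q) : V := p.base

/-- The target vertex of a path. -/
def Path.tgtV (p : Path Q) : V := p.arrows.head?.elim p.base Q.tgt

/-- The vertex of a path sitting between its first `n` arrows and the rest:
the center of the corresponding split of the path. -/
def Path.vertexAt (p : Path Q) (n : ℕ) : V :=
  (p.arrows.drop n).head?.elim p.base Q.tgt

/-- A path is permitted if none of its length-two subpaths is a relation. -/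
def Path.Permitted (p : Path Q) : Prop :=
  p.arrows.Chain' (fun a b => ¬ Q.rel a b)

/-- A path is forbidden if each of its length-two subpaths is a relation. -/
def Path.Forbidden (p : Path Q) : Prop :=
  p.arrows.Chain' (fun a b => Q.rel a b)

/-- Permitted threads: maximal non-trivial permitted paths, together with the trivial
paths `e_i` at vertices `i` with `deg i = 1`, or `deg i = 2` with the two arrows
`α, β` at `i` satisfying `src α = tgt β = i` and `αβ ∉ I`. -/
def IsPermThread (Q : BQuiv V A) (p : Path Q) : Prop :=
  (p.arrows ≠ [] ∧ p.Permitted ∧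
    (∀ a b, p.arrows.head? = some b → Q.src a = Q.tgt b → Q.rel a b) ∧
    (∀ a c, p.arrows.getLast? = some a → Q.src a = Q.tgt c → Q.rel a c)) ∨
  (p.arrows = [] ∧ (Q.deg p.base = 1 ∨ (Q.deg p.base = 2 ∧
    ∃ α β, Q.src α = p.base ∧ Q.tgt β = p.base ∧ ¬ Q.rel α β)))

/-- Forbidden threads: maximal non-trivial forbidden paths, together with the trivial
paths `e_i` at vertices `i` with `deg i = 1`, or `deg i = 2` with the two arrows
`α, β` at `i` satisfying `src α = tgt β = i` and `αβ ∈ I`. -/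
def IsForbThread (Q : BQuiv V A) (p : Path Q) : Prop :=
  (p.arrows ≠ [] ∧ p.Forbidden ∧
    (∀ a b, p.arrows.head? = some b → Q.src a = Q.tgt b → ¬ Q.rel a b) ∧
    (∀ a c, p.arrows.getLast? = some a → Q.src a = Q.tgt c → ¬ Q.rel a c)) ∨
  (p.arrows = [] ∧ (Q.deg p.base = 1 ∨ (Q.deg p.base = 2 ∧
    ∃ α β, Q.src α = p.base ∧ Q.tgt β = p.base ∧ Q.rel α β)))

end BQuiv

namespace BQuiv

variable {V A : Type}

/-- The type of permitted threads of `(Q, I)`: the vertices of the associated marked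
ribbon graph `△(Q, I)`. -/
def PThread (Q : BQuiv V A) : Type := {p : Path Q // IsPermThread Q p}

/-- The type of split permitted threads of `(Q, I)`: a permitted thread together with a
cut position.  These are the half-edges of the associated marked ribbon graph
`△(Q, I)`. -/
def PSplit (Q : BQuiv V A) : Type := {x : PThread Q × ℕ // x.2 ≤ x.1.1.arrows.length}

/-- The thread (vertex of `△(Q, I)`) over which a split permitted thread lies. -/
def PSplit.thread {Q : BQuiv V A} (x : PSplit Q) : PThread Q := x.1.1

/-- The cut position of a split permitted thread. -/
def PSplit.idx {Q : BQuiv V A} (x : PSplit Q) : ℕ := x.1.2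

/-- The center of a split permitted thread `(η″, η′)`: the vertex `s(η″) = t(η′)`.
The centers realize the bijection between the edges of `△(Q, I)` and the vertices
of `Q`. -/
def PSplit.center {Q : BQuiv V A} (x : PSplit Q) : V :=
  x.1.1.1.vertexAt x.1.2

end BQuiv

open BQuiv

/-! A nontrivial permitted thread is determined by the arrow it starts with, and an arrow `a`
starts one exactly when no path `ac` of length two is permitted. So every thread, trivial or not,
starts at a well-defined vertex, and the gentle axioms force the number of arrows into a vertex plus
the number of threads starting there to be two, by cases on the number of incoming arrows. Summing
over the vertices gives `|Q₁| + p = 2|Q₀|`. Some thread exists because permitted paths have bounded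
length, and `|Q₀| - 1 ≤ |Q₁|` holds for every connected quiver. -/

section HeadMaximalChain

variable {α : Type*} {R : α → α → Prop}

/-- A list that is a chain for `R` and cannot be extended at its head. As paths are written from
right to left, for `R = Q.PermComp` these are the permitted paths that cannot be continued
forwards. -/
structure IsHeadMaximalChain (R : α → α → Prop) (l : List α) : Prop where
  isChain : l.IsChain R
  not_rel_head : ∀ a b, l.head? = some b → ¬ R a b

theorem wellFounded_of_isChain_length_ne {m : ℕ}
    (h : ∀ l : List α, l.length = m → ¬ l.IsChain R) : WellFounded R := by
  rw [wellFounded_iff_isEmpty_descending_chain]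
  refine ⟨fun ⟨f, hf⟩ => h (List.ofFn fun i : Fin m => f i).reverse (by simp) ?_⟩
  rw [List.isChain_reverse, List.isChain_ofFn]
  exact fun i _ => hf i

theorem isHeadMaximalChain_singleton {b : α} :
    IsHeadMaximalChain R [b] ↔ ∀ a, ¬ R a b :=
  ⟨fun h a => h.not_rel_head a b rfl, fun h => ⟨.singleton b, by simpa using h⟩⟩

theorem isHeadMaximalChain_concat {l : List α} {a b : α} (hl : l.getLast? = some a) :
    IsHeadMaximalChain R (l ++ [b]) ↔ IsHeadMaximalChain R l ∧ R a b := by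
  have hhead : (l ++ [b]).head? = l.head? :=
    List.head?_append_of_ne_nil l (by rintro rfl; simp at hl)
  constructor
  · rintro ⟨hchain, hmax⟩
    rw [List.isChain_append] at hchain
    exact ⟨⟨hchain.1, hhead ▸ hmax⟩, hchain.2.2 a hl b rfl⟩
  · rintro ⟨⟨hchain, hmax⟩, hab⟩
    refine ⟨List.isChain_append.2 ⟨hchain, .singleton b, ?_⟩, hhead ▸ hmax⟩
    simpa [hl] using hab

theorem existsUnique_isHeadMaximalChain (hwf : WellFounded R) (hR : Relator.LeftUnique R) (b : α) :
    ∃! l, IsHeadMaximalChain R l ∧ l.getLast? = some b := by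
  induction b using hwf.induction with
  | _ b ih =>
  by_cases hb : ∃ a, R a b
  · obtain ⟨a, hab⟩ := hb
    obtain ⟨l, ⟨hl, hla⟩, hunique⟩ := ih a hab
    refine ⟨l ++ [b], ⟨(isHeadMaximalChain_concat hla).2 ⟨hl, hab⟩, by simp⟩, ?_⟩
    rintro l' ⟨hl', hl'b⟩
    obtain ⟨r, rfl⟩ := List.getLast?_eq_some_iff.1 hl'b
    cases hr : r.getLast? with
    | none =>
      obtain rfl := List.getLast?_eq_none_iff.1 hr
      exact absurd hab (isHeadMaximalChain_singleton.1 hl' a)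
    | some a' =>
      obtain ⟨hr', ha'b⟩ := (isHeadMaximalChain_concat hr).1 hl'
      rw [hunique r ⟨hr', hr.trans (congrArg some (hR ha'b hab))⟩]
  · rw [not_exists] at hb
    refine ⟨[b], ⟨isHeadMaximalChain_singleton.2 hb, rfl⟩, ?_⟩
    rintro l ⟨hl, hlb⟩
    obtain ⟨r, rfl⟩ := List.getLast?_eq_some_iff.1 hlb
    cases hr : r.getLast? with
    | none => rw [List.getLast?_eq_none_iff.1 hr, List.nil_append]
    | some a => exact absurd ((isHeadMaximalChain_concat hr).1 hl).2 (hb a)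

end HeadMaximalChain

namespace BQuiv

variable {V A : Type} {Q : BQuiv V A}

/-- Composability of `a` after `b` into a permitted path `ab` of length two. -/
def PermComp (Q : BQuiv V A) (a b : A) : Prop :=
  Q.src a = Q.tgt b ∧ ¬ Q.rel a b

/-- An arrow at which permitted threads start: it cannot be preceded in a permitted path. -/
def IsInitial (Q : BQuiv V A) (a : A) : Prop :=
  ∀ c, ¬ Q.PermComp a c

/-- A vertex `v` whose trivial path `e_v` is a permitted thread. -/
def HasTrivialThread (Q : BQuiv V A) (v : V) : Prop :=
  Q.deg v = 1 ∨ (Q.deg v = 2 ∧ ∃ α β, Q.src α = v ∧ Q.tgt β = v ∧ ¬ Q.rel α β)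

/-- Adjacency of two vertices in the underlying undirected multigraph. -/
def Adjacent (Q : BQuiv V A) (x y : V) : Prop :=
  ∃ a, (Q.src a = x ∧ Q.tgt a = y) ∨ (Q.src a = y ∧ Q.tgt a = x)

/-- Bound quivers whose permitted paths extend uniquely forwards, as in a gentle bound quiver, but
may branch backwards: an arrow `b` may have two arrows `c` with `bc ∉ I`. -/
structure IsForwardGentle (Q : BQuiv V A) : Prop where
  out_le : ∀ v, Nat.card {a : A // Q.src a = v} ≤ 2
  in_le : ∀ v, Nat.card {a : A // Q.tgt a = v} ≤ 2
  permComp_leftUnique : Relator.LeftUnique Q.PermComp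
  rel_biUnique : Relator.BiUnique Q.rel
  admissible : ∃ m, ∀ l : List A, l.length = m → ¬ l.IsChain Q.PermComp
  connected : ∀ u v, Relation.ReflTransGen Q.Adjacent u v
  has_arrow : Nonempty A

theorem isChain_permComp_iff {l : List A} :
    l.IsChain Q.PermComp ↔ Q.PathChain l ∧ l.IsChain (fun a b => ¬ Q.rel a b) := by
  change _ ↔ l.IsChain (fun a b => Q.src a = Q.tgt b) ∧ _
  simp only [PermComp, List.isChain_iff_getElem, forall_and]

theorem IsGentle.isForwardGentle (hQ : Q.IsGentle) : Q.IsForwardGentle where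
  out_le := hQ.out_le
  in_le := hQ.in_le
  permComp_leftUnique a a' b h h' := hQ.unique_nonrel_post b a a' h.1 h'.1 h.2 h'.2
  rel_biUnique :=
    ⟨fun a a' b => hQ.unique_rel_post b a a', fun b c c' => hQ.unique_rel_pre b c c'⟩
  admissible := by
    obtain ⟨m, -, hm⟩ := hQ.admissible
    refine ⟨m, fun l hl hchain => ?_⟩
    obtain ⟨hpath, hperm⟩ := isChain_permComp_iff.1 hchain
    exact hm l hl hpath hperm
  connected := hQ.connected
  has_arrow := hQ.has_arrow

namespace IsForwardGentle

theorem wellFounded_permComp (hQ : Q.IsForwardGentle) : WellFounded Q.PermComp :=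
  hQ.admissible.elim fun _ h => wellFounded_of_isChain_length_ne h

theorem exists_isInitial (hQ : Q.IsForwardGentle) : ∃ a, Q.IsInitial a := by
  obtain ⟨m, hm⟩ := hQ.admissible
  have hwf : WellFounded (flip Q.PermComp) :=
    wellFounded_of_isChain_length_ne fun l hl hchain =>
      hm l.reverse (by simpa using hl) (List.isChain_reverse.2 hchain)
  have := hQ.has_arrow
  obtain ⟨a, -, ha⟩ := hwf.has_min Set.univ Set.univ_nonempty
  exact ⟨a, fun c => ha c (Set.mem_univ c)⟩

theorem exists_src_eq_or_exists_tgt_eq (hQ : Q.IsForwardGentle) (v : V) :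
    (∃ a, Q.src a = v) ∨ ∃ a, Q.tgt a = v := by
  obtain ⟨a⟩ := hQ.has_arrow
  rcases (hQ.connected v (Q.src a)).cases_head with rfl | ⟨_, ⟨b, hb | hb⟩, -⟩
  · exact .inl ⟨a, rfl⟩
  · exact .inl ⟨b, hb.1⟩
  · exact .inr ⟨b, hb.2⟩

end IsForwardGentle

section Threads

/-- The nontrivial permitted threads: maximal nontrivial permitted paths. -/
def IsNontrivialPermThread (Q : BQuiv V A) (p : Path Q) : Prop :=
  p.arrows ≠ [] ∧ p.Permitted ∧
    (∀ a b, p.arrows.head? = some b → Q.src a = Q.tgt b → Q.rel a b) ∧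
    (∀ a c, p.arrows.getLast? = some a → Q.src a = Q.tgt c → Q.rel a c)

/-- The trivial permitted threads. -/
def IsTrivialPermThread (Q : BQuiv V A) (p : Path Q) : Prop :=
  p.arrows = [] ∧ Q.HasTrivialThread p.base

theorem not_permComp_iff {a b : A} : ¬ Q.PermComp a b ↔ (Q.src a = Q.tgt b → Q.rel a b) := by
  rw [PermComp, not_and, not_not]

theorem isNontrivialPermThread_iff {p : Path Q} :
    Q.IsNontrivialPermThread p ↔ IsHeadMaximalChain Q.PermComp p.arrows ∧
      ∃ s, Q.IsInitial s ∧ p.arrows.getLast? = some s := by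
  simp only [IsInitial, not_permComp_iff]
  constructor
  · rintro ⟨hne, hperm, hhead, hlast⟩
    have hs := List.getLast?_eq_some_getLast hne
    exact ⟨⟨isChain_permComp_iff.2 ⟨p.chain, hperm⟩, by simpa only [not_permComp_iff] using hhead⟩,
      _, fun c => hlast _ c hs, hs⟩
  · rintro ⟨⟨hchain, hhead⟩, s, hinit, hs⟩
    refine ⟨by rintro h; simp [h] at hs, (isChain_permComp_iff.1 hchain).2,
      by simpa only [not_permComp_iff] using hhead, fun a c ha => ?_⟩
    obtain rfl := Option.some.inj (ha.symm.trans hs)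
    exact hinit c

theorem Path.eq_of_base_eq_of_arrows_eq {p q : Path Q} (hbase : p.base = q.base)
    (harrows : p.arrows = q.arrows) : p = q := by
  cases p; cases q; cases hbase; cases harrows; rfl

theorem IsForwardGentle.existsUnique_isNontrivialPermThread (hQ : Q.IsForwardGentle) {s : A}
    (hs : Q.IsInitial s) :
    ∃! p : Path Q, Q.IsNontrivialPermThread p ∧ p.arrows.getLast? = some s := by
  obtain ⟨l, ⟨hl, hls⟩, hunique⟩ :=
    existsUnique_isHeadMaximalChain hQ.wellFounded_permComp hQ.permComp_leftUnique s
  let p : Path Q :=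
    { base := Q.src s
      arrows := l
      chain := (isChain_permComp_iff.1 hl.isChain).1
      base_eq := fun a ha => congrArg Q.src (Option.some.inj (ha.symm.trans hls)) }
  refine ⟨p, ⟨isNontrivialPermThread_iff.2 ⟨hl, s, hs, hls⟩, hls⟩, ?_⟩
  rintro q ⟨hq, hqs⟩
  exact Path.eq_of_base_eq_of_arrows_eq (q.base_eq s hqs).symm
    (hunique _ ⟨(isNontrivialPermThread_iff.1 hq).1, hqs⟩)

theorem IsNontrivialPermThread.isInitial_getLast {p : Path Q} (hp : Q.IsNontrivialPermThread p) :
    Q.IsInitial (p.arrows.getLast hp.1) := by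
  obtain ⟨-, s, hs, hps⟩ := isNontrivialPermThread_iff.1 hp
  rwa [List.getLast_of_getLast?_eq_some hps]

/-- A nontrivial permitted thread corresponds to the arrow it starts with. -/
noncomputable def IsForwardGentle.nontrivialPermThreadEquiv (hQ : Q.IsForwardGentle) :
    {p // Q.IsNontrivialPermThread p} ≃ {a // Q.IsInitial a} :=
  .ofBijective (fun p => ⟨p.1.arrows.getLast p.2.1, p.2.isInitial_getLast⟩) <| by
    refine (Function.bijective_iff_existsUnique _).2 fun ⟨s, hs⟩ => ?_
    obtain ⟨p, ⟨hp, hps⟩, hunique⟩ := hQ.existsUnique_isNontrivialPermThread hs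
    refine ⟨⟨p, hp⟩, Subtype.ext (List.getLast_of_getLast?_eq_some hps), fun q hqs => ?_⟩
    refine Subtype.ext (hunique q.1 ⟨q.2, ?_⟩)
    rw [List.getLast?_eq_some_getLast q.2.1]
    exact congrArg some (congrArg Subtype.val hqs)

/-- A trivial permitted thread corresponds to its vertex. -/
def trivialPermThreadEquiv :
    {p // Q.IsTrivialPermThread p} ≃ {v // Q.HasTrivialThread v} where
  toFun p := ⟨p.1.base, p.2.2⟩
  invFun v := ⟨⟨v.1, [], .nil, by simp⟩, rfl, v.2⟩
  left_inv p := Subtype.ext (Path.eq_of_base_eq_of_arrows_eq rfl p.2.1.symm)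
  right_inv _ := rfl

theorem disjoint_isNontrivialPermThread_isTrivialPermThread :
    Disjoint Q.IsNontrivialPermThread Q.IsTrivialPermThread :=
  Pi.disjoint_iff.2 fun _ => Prop.disjoint_iff.2 fun h => h.1.1 h.2.1

/-- A permitted thread is encoded by its first arrow if it is nontrivial, and by its vertex if it
is trivial. -/
noncomputable def IsForwardGentle.pThreadEquiv (hQ : Q.IsForwardGentle) :
    PThread Q ≃ {a // Q.IsInitial a} ⊕ {v // Q.HasTrivialThread v} :=
  (subtypeOrEquiv _ _ disjoint_isNontrivialPermThread_isTrivialPermThread).trans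
    (hQ.nontrivialPermThreadEquiv.sumCongr trivialPermThreadEquiv)

theorem IsForwardGentle.card_pThread [Finite V] [Finite A] (hQ : Q.IsForwardGentle) :
    Nat.card (PThread Q) = Nat.card {a // Q.IsInitial a} + Nat.card {v // Q.HasTrivialThread v} :=
  (Nat.card_congr hQ.pThreadEquiv).trans Nat.card_sum

end Threads

section VertexCount

theorem sum_ite_hasTrivialThread [Fintype V] :
    (∑ v, if Q.HasTrivialThread v then 1 else 0) = Nat.card {v // Q.HasTrivialThread v} := by
  rw [Nat.card_eq_fintype_card, Fintype.card_subtype, Finset.card_filter]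

variable [Fintype A]

/-- The arrows with source `v`. -/
noncomputable def outArrows (Q : BQuiv V A) (v : V) : Finset A := {a | Q.src a = v}

/-- The arrows with target `v`. -/
noncomputable def inArrows (Q : BQuiv V A) (v : V) : Finset A := {a | Q.tgt a = v}

/-- The arrows with source `v` at which permitted threads start. -/
noncomputable def initialArrows (Q : BQuiv V A) (v : V) : Finset A :=
  {a ∈ Q.outArrows v | Q.IsInitial a}

variable {v : V}

@[simp] theorem mem_outArrows {a : A} : a ∈ Q.outArrows v ↔ Q.src a = v := by
  simp [outArrows]

@[simp] theorem mem_inArrows {a : A} : a ∈ Q.inArrows v ↔ Q.tgt a = v := by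
  simp [inArrows]

theorem card_outArrows : (Q.outArrows v).card = Nat.card {a // Q.src a = v} := by
  rw [Nat.card_eq_fintype_card, Fintype.card_subtype, outArrows]

theorem card_inArrows : (Q.inArrows v).card = Nat.card {a // Q.tgt a = v} := by
  rw [Nat.card_eq_fintype_card, Fintype.card_subtype, inArrows]

theorem deg_eq_card_add_card : Q.deg v = (Q.outArrows v).card + (Q.inArrows v).card := by
  rw [deg, card_outArrows, card_inArrows]

theorem mem_initialArrows {a : A} :
    a ∈ Q.initialArrows v ↔ Q.src a = v ∧ ∀ c ∈ Q.inArrows v, Q.rel a c := by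
  simp only [initialArrows, Finset.mem_filter, mem_outArrows, mem_inArrows, IsInitial,
    not_permComp_iff]
  exact and_congr_right (by rintro rfl; simp only [eq_comm])

theorem card_initialArrows_add_ite_of_inArrows_eq_empty (hin : Q.inArrows v = ∅)
    (hpos : 0 < (Q.outArrows v).card) (hout : (Q.outArrows v).card ≤ 2) :
    (Q.initialArrows v).card + (if Q.HasTrivialThread v then 1 else 0) = 2 := by
  have hinit : Q.initialArrows v = Q.outArrows v := by
    ext a; simp [mem_initialArrows, hin]
  have hno (b : A) : Q.tgt b ≠ v := by simp [← mem_inArrows, hin]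
  have htriv : Q.HasTrivialThread v ↔ (Q.outArrows v).card = 1 := by
    simp [HasTrivialThread, deg_eq_card_add_card, hin, hno]
  rw [hinit, if_congr htriv rfl rfl]
  split_ifs <;> omega

theorem hasTrivialThread_iff_of_inArrows_eq_singleton {c : A} (hin : Q.inArrows v = {c}) :
    Q.HasTrivialThread v ↔ (Q.outArrows v).card = 0 ∨
      ((Q.outArrows v).card = 1 ∧ ∃ α ∈ Q.outArrows v, ¬ Q.rel α c) := by
  simp only [HasTrivialThread, deg_eq_card_add_card, hin, Finset.card_singleton,
    ← mem_outArrows, ← mem_inArrows, Finset.mem_singleton, Nat.add_eq_right,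
    Nat.reduceEqDiff, exists_and_left, exists_eq_left]

theorem hasTrivialThread_iff_initialArrows_eq_empty {c : A} (hin : Q.inArrows v = {c})
    (hperm : Relator.LeftUnique Q.PermComp) :
    Q.HasTrivialThread v ↔ Q.initialArrows v = ∅ := by
  have hempty : Q.initialArrows v = ∅ ↔ ∀ a ∈ Q.outArrows v, ¬ Q.rel a c := by
    simp [Finset.eq_empty_iff_forall_notMem, mem_initialArrows, hin]
  rw [hasTrivialThread_iff_of_inArrows_eq_singleton hin, hempty]
  constructor
  · rintro (h0 | ⟨h1, α, hα, hαc⟩) a ha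
    · exact absurd ha (Finset.card_eq_zero.1 h0 ▸ Finset.notMem_empty a)
    · rwa [Finset.card_le_one.1 h1.le a ha α hα]
  · intro hnrel
    have htgt : Q.tgt c = v := mem_inArrows.1 (hin ▸ Finset.mem_singleton_self c)
    have hpermComp (a) (ha : a ∈ Q.outArrows v) : Q.PermComp a c :=
      ⟨(mem_outArrows.1 ha).trans htgt.symm, hnrel a ha⟩
    have hle : (Q.outArrows v).card ≤ 1 := Finset.card_le_one.2 fun a ha b hb =>
      hperm (hpermComp a ha) (hpermComp b hb)
    refine (Nat.le_one_iff_eq_zero_or_eq_one.1 hle).imp_right fun h1 => ⟨h1, ?_⟩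
    obtain ⟨α, hα⟩ := Finset.card_pos.1 (h1 ▸ one_pos)
    exact ⟨α, hα, hnrel α hα⟩

theorem card_initialArrows_add_ite_of_inArrows_eq_singleton {c : A} (hin : Q.inArrows v = {c})
    (hperm : Relator.LeftUnique Q.PermComp) (hrel : Relator.LeftUnique Q.rel) :
    (Q.initialArrows v).card + (if Q.HasTrivialThread v then 1 else 0) = 1 := by
  have hle : (Q.initialArrows v).card ≤ 1 := by
    have hrelc (a) (ha : a ∈ Q.initialArrows v) : Q.rel a c :=
      (mem_initialArrows.1 ha).2 c (hin ▸ Finset.mem_singleton_self c)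
    exact Finset.card_le_one.2 fun a ha b hb => hrel (hrelc a ha) (hrelc b hb)
  have htriv : Q.HasTrivialThread v ↔ (Q.initialArrows v).card = 0 :=
    (hasTrivialThread_iff_initialArrows_eq_empty hin hperm).trans Finset.card_eq_zero.symm
  rw [if_congr htriv rfl rfl]
  split_ifs <;> omega

theorem card_initialArrows_add_ite_of_two_le_card_inArrows (hin : 2 ≤ (Q.inArrows v).card)
    (hrel : Relator.RightUnique Q.rel) :
    (Q.initialArrows v).card + (if Q.HasTrivialThread v then 1 else 0) = 0 := by
  have hinit : Q.initialArrows v = ∅ := by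
    obtain ⟨c, hc, c', hc', hne⟩ := Finset.one_lt_card.1 hin
    refine Finset.eq_empty_of_forall_notMem fun a ha => ?_
    rw [mem_initialArrows] at ha
    exact hne (hrel (ha.2 c hc) (ha.2 c' hc'))
  have htriv : ¬ Q.HasTrivialThread v := by
    rw [HasTrivialThread, deg_eq_card_add_card]
    rintro (hdeg | ⟨hdeg, α, -, hα, -⟩)
    · omega
    · have := Finset.card_pos.2 ⟨α, mem_outArrows.2 hα⟩
      omega
  rw [hinit, if_neg htriv, Finset.card_empty]

theorem IsForwardGentle.card_inArrows_add_card_initialArrows_add_ite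
    (hQ : Q.IsForwardGentle) (v : V) :
    (Q.inArrows v).card + ((Q.initialArrows v).card + if Q.HasTrivialThread v then 1 else 0)
      = 2 := by
  have hle : (Q.inArrows v).card ≤ 2 := card_inArrows.trans_le (hQ.in_le v)
  obtain h0 | h1 | h2 :
    (Q.inArrows v).card = 0 ∨ (Q.inArrows v).card = 1 ∨ 2 ≤ (Q.inArrows v).card := by omega
  · have hin := Finset.card_eq_zero.1 h0
    have hpos : 0 < (Q.outArrows v).card := by
      rw [Finset.card_pos]
      rcases hQ.exists_src_eq_or_exists_tgt_eq v with ⟨a, ha⟩ | ⟨a, ha⟩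
      · exact ⟨a, mem_outArrows.2 ha⟩
      · simp [← mem_inArrows, hin] at ha
    rw [h0, card_initialArrows_add_ite_of_inArrows_eq_empty hin hpos
      (card_outArrows.trans_le (hQ.out_le v))]
  · obtain ⟨c, hin⟩ := Finset.card_eq_one.1 h1
    rw [h1, card_initialArrows_add_ite_of_inArrows_eq_singleton hin hQ.permComp_leftUnique
      hQ.rel_biUnique.left]
  · rw [card_initialArrows_add_ite_of_two_le_card_inArrows h2 hQ.rel_biUnique.right]
    omega

theorem sum_card_inArrows [Fintype V] : ∑ v, (Q.inArrows v).card = Fintype.card A :=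
  (Finset.card_eq_sum_card_fiberwise (s := Finset.univ) (by simp)).symm

theorem sum_card_initialArrows [Fintype V] :
    ∑ v, (Q.initialArrows v).card = Nat.card {a // Q.IsInitial a} := by
  rw [Nat.card_eq_fintype_card, Fintype.card_subtype,
    Finset.card_eq_sum_card_fiberwise (f := Q.src) (t := Finset.univ) (by simp)]
  simp only [initialArrows, outArrows, Finset.filter_filter, and_comm]

theorem IsForwardGentle.two_mul_card_eq_card_add_card_pThread [Fintype V]
    (hQ : Q.IsForwardGentle) :
    2 * Fintype.card V = Fintype.card A + Nat.card (PThread Q) := by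
  rw [hQ.card_pThread, ← sum_card_inArrows (Q := Q), ← sum_card_initialArrows,
    ← sum_ite_hasTrivialThread, ← Finset.sum_add_distrib, ← Finset.sum_add_distrib,
    Finset.sum_congr rfl fun v _ => hQ.card_inArrows_add_card_initialArrows_add_ite v]
  simp [mul_comm]

end VertexCount

theorem IsForwardGentle.card_pThread_pos [Finite V] [Finite A] (hQ : Q.IsForwardGentle) :
    0 < Nat.card (PThread Q) := by
  have : Nonempty {a // Q.IsInitial a} := nonempty_subtype.2 hQ.exists_isInitial
  rw [hQ.card_pThread]
  exact Nat.add_pos_left Nat.card_pos _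

section Connected

/-- The simple graph on the vertices obtained by forgetting orientations, multiplicities and
loops. -/
def underlyingGraph (Q : BQuiv V A) : SimpleGraph V :=
  SimpleGraph.fromRel fun x y => ∃ a, Q.src a = x ∧ Q.tgt a = y

theorem underlyingGraph_adj {x y : V} : Q.underlyingGraph.Adj x y ↔ x ≠ y ∧ Q.Adjacent x y := by
  simp only [underlyingGraph, SimpleGraph.fromRel_adj, Adjacent, exists_or]

theorem reachable_underlyingGraph {x y : V} (h : Relation.ReflTransGen Q.Adjacent x y) :
    Q.underlyingGraph.Reachable x y := by
  induction h with
  | refl => rfl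
  | @tail y z _ hyz ih =>
    rcases eq_or_ne y z with rfl | hne
    · exact ih
    · exact ih.trans (underlyingGraph_adj.2 ⟨hne, hyz⟩).reachable

theorem card_edgeSet_underlyingGraph_le [Finite A] :
    Nat.card Q.underlyingGraph.edgeSet ≤ Nat.card A := by
  have hsub : Q.underlyingGraph.edgeSet ⊆ Set.range fun a => s(Q.src a, Q.tgt a) := by
    rintro ⟨x, y⟩ hxy
    obtain ⟨-, a, ⟨rfl, rfl⟩ | ⟨rfl, rfl⟩⟩ := underlyingGraph_adj.1 hxy
    · exact ⟨a, rfl⟩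
    · exact ⟨a, Sym2.eq_swap⟩
  exact (Nat.card_mono (Set.finite_range _) hsub).trans (Finite.card_range_le _)

theorem card_vertices_le_card_arrows_add_one [Finite A]
    (hQ : ∀ u v, Relation.ReflTransGen Q.Adjacent u v) :
    Nat.card V ≤ Nat.card A + 1 := by
  rcases isEmpty_or_nonempty V
  · simp
  · have hconn : Q.underlyingGraph.Connected := ⟨fun u v => reachable_underlyingGraph (hQ u v)⟩
    exact hconn.card_vert_le_card_edgeSet_add_one.trans
      (Nat.add_le_add_right card_edgeSet_underlyingGraph_le 1)

end Connected

end BQuiv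

theorem stmt8_general {V A : Type} [Fintype V] [Fintype A] (Q : BQuiv V A)
    (hQ : Q.IsForwardGentle) :
    2 * Fintype.card V = Fintype.card A + Nat.card (PThread Q) ∧
    1 ≤ Nat.card (PThread Q) ∧
    Fintype.card V - 1 ≤ Fintype.card A ∧
    Fintype.card A ≤ 2 * Fintype.card V - 1 := by
  have hcount := hQ.two_mul_card_eq_card_add_card_pThread
  have hpos := hQ.card_pThread_pos
  have hconn := card_vertices_le_card_arrows_add_one hQ.connected
  simp only [Nat.card_eq_fintype_card (α := V), Nat.card_eq_fintype_card (α := A)] at hconn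
  exact ⟨hcount, hpos, by omega, by omega⟩

/-- Let `(Q, I)` be a gentle bound quiver and `p` the number of its
permitted threads.  Then `2|Q₀| = |Q₁| + p`; in particular `p = 2|Q₀| - |Q₁| ≥ 1` and
`|Q₀| - 1 ≤ |Q₁| ≤ 2|Q₀| - 1`. -/
theorem stmt8 {V A : Type} [Fintype V] [Fintype A] (Q : BQuiv V A) (hQ : Q.IsGentle) :
    2 * Fintype.card V = Fintype.card A + Nat.card (PThread Q) ∧
    1 ≤ Nat.card (PThread Q) ∧
    Fintype.card V - 1 ≤ Fintype.card A ∧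
    Fintype.card A ≤ 2 * Fintype.card V - 1 :=
  stmt8_general Q hQ.isForwardGentle
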